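/- arXiv:1909.13348 — 5 statements merged into one kernel-verified Lean document; each statement's English description precedes it below -/
import Mathlib

section
/- Let ≤ be an embedding order on A*. Let W, V ∈ A* with V = b₁b₂⋯b_m, let X = b₁⋯b_i be a prefix of V and Y = b_{i+1}⋯b_m the corresponding suffix, so that V = XY. Let P be the maximal prefix of W such that P ≤ X, and write W = PS. Then W ≤ V if and only if S ≤ Y. -/
/-- An alphabet `A` whose letters carry positive integer weights, extended additively to
words (`List A`).  An *embedding order* is a partial order `le` on words such that the
empty word is minimum, containment of distinct words strictly increases the weight, and
containment into `V = b₁⋯b_m` is witnessed by a factorisation of the smaller word into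
`m` (possibly empty) factors, the `i`-th factor being contained in the single letter
`bᵢ`. -/
structure EmbeddingOrder (A : Type*) (w : A → ℕ) where
  le : List A → List A → Prop
  le_refl : ∀ W, le W W
  le_trans : ∀ {U V W}, le U V → le V W → le U W
  le_antisymm : ∀ {V W}, le V W → le W V → V = W
  nil_le : ∀ W, le [] W
  weight_lt : ∀ {W V}, le W V → W ≠ V → (W.map w).sum < (V.map w).sum
  le_iff_factor : ∀ W V, le W V ↔ ∃ Ws : List (List A),
    Ws.length = V.length ∧ Ws.flatten = W ∧ ∀ q ∈ Ws.zip V, le q.1 [q.2]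

theorem EmbeddingOrder.le_append_iff {A : Type*} {w : A → ℕ} (E : EmbeddingOrder A w)
    (W X Y : List A) :
    E.le W (X ++ Y) ↔ ∃ P S, W = P ++ S ∧ E.le P X ∧ E.le S Y := by
  constructor
  · intro h
    obtain ⟨Ws, hl, hf, hq⟩ := (E.le_iff_factor _ _).1 h
    rw [List.length_append] at hl
    have h1 : (Ws.take X.length).length = X.length := by
      rw [List.length_take]; omega
    have h2 : (Ws.drop X.length).length = Y.length := by
      rw [List.length_drop]; omega
    rw [← List.take_append_drop X.length Ws, List.zip_append h1] at hq
    refine ⟨(Ws.take X.length).flatten, (Ws.drop X.length).flatten, ?_, ?_, ?_⟩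
    · rw [← List.flatten_append, List.take_append_drop, hf]
    · exact (E.le_iff_factor _ _).2
        ⟨_, h1, rfl, fun q hm => hq q (List.mem_append_left _ hm)⟩
    · exact (E.le_iff_factor _ _).2
        ⟨_, h2, rfl, fun q hm => hq q (List.mem_append_right _ hm)⟩
  · rintro ⟨P, S, rfl, hP, hS⟩
    obtain ⟨Ps, hl, hf, hq⟩ := (E.le_iff_factor _ _).1 hP
    obtain ⟨Ss, hl', hf', hq'⟩ := (E.le_iff_factor _ _).1 hS
    refine (E.le_iff_factor _ _).2 ⟨Ps ++ Ss, by simp [hl, hl'], by simp [hf, hf'], ?_⟩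
    rw [List.zip_append hl]
    intro q hm
    rcases List.mem_append.1 hm with hm | hm
    · exact hq q hm
    · exact hq' q hm

/-- **Greedy embedding (Proposition `prop-greed-is-good`).**
Let `≤` be an embedding order on `A*`.  Let `W, V ∈ A*`, write `V = X ++ Y` where `X` is
a prefix of `V` and `Y` the corresponding suffix.  Let `P` be the maximal prefix of `W`
with `P ≤ X`, and write `W = P ++ S`.  Then `W ≤ V` if and only if `S ≤ Y`. -/
theorem greedy_embedding {A : Type*} (w : A → ℕ) (E : EmbeddingOrder A w)
    (W V X Y P S : List A)
    (hV : V = X ++ Y) (hW : W = P ++ S)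
    (hPX : E.le P X)
    (hPmax : ∀ P' : List A, P' <+: W → E.le P' X → P'.length ≤ P.length) :
    E.le W V ↔ E.le S Y := by
  subst hV
  constructor
  · intro h
    obtain ⟨P', S', hW', hP', hS'⟩ := (E.le_append_iff _ _ _).1 h
    have hlen := hPmax P' ⟨S', hW'.symm⟩ hP'
    have hpre : P' <+: P :=
      List.prefix_of_prefix_length_le ⟨S', hW'.symm⟩ ⟨S, hW.symm⟩ hlen
    obtain ⟨T, rfl⟩ := hpre
    have hST : S' = T ++ S := by
      rw [hW, List.append_assoc] at hW'
      exact (List.append_cancel_left hW').symm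
    subst hST
    exact E.le_trans
      ((E.le_append_iff _ _ _).2 ⟨[], S, rfl, E.nil_le T, E.le_refl S⟩) hS'
  · intro h
    exact (E.le_append_iff _ _ _).2 ⟨P, S, hW, hPX, h⟩
end

section
/- Let ≤ be an embedding order on A*. For any W ∈ A*, the generating-function identity I_W(x) = I*_W(x)/(1 − A(x)) holds as formal power series. In particular, for W, V ∈ A*, I_W(x) = I_V(x) if and only if I*_W(x) = I*_V(x). -/
/-- The weight of a word: the sum of the weights of its letters. -/
def wt {A : Type*} (w : A → ℕ) (W : List A) : ℕ := (W.map w).sum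

/-- `V` is a *minimal container* of `W` (written `W ≤* V`): `W ≤ V` but `W ≰ P` for
every proper prefix `P` of `V`. -/
def MinContainer {A : Type*} {w : A → ℕ} (E : EmbeddingOrder A w) (W V : List A) : Prop :=
  E.le W V ∧ ∀ P : List A, P <+: V → P ≠ V → ¬ E.le W P

/-- The generating function `A(x) = Σ_{a ∈ A} x^{weight a}` of the alphabet,
as a formal power series (with integer coefficients). -/
noncomputable def Aser (A : Type*) (w : A → ℕ) : PowerSeries ℤ :=
  PowerSeries.mk fun n => (Set.ncard {a : A | w a = n} : ℤ)

/-- `I_W(x) = Σ_{V : W ≤ V} x^{weight V}` as a formal power series. -/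
noncomputable def Iser {A : Type*} (w : A → ℕ) (E : EmbeddingOrder A w) (W : List A) :
    PowerSeries ℤ :=
  PowerSeries.mk fun n => (Set.ncard {V : List A | E.le W V ∧ wt w V = n} : ℤ)

/-- `I*_W(x) = Σ_{V : W ≤* V} x^{weight V}` as a formal power series. -/
noncomputable def IserStar {A : Type*} (w : A → ℕ) (E : EmbeddingOrder A w) (W : List A) :
    PowerSeries ℤ :=
  PowerSeries.mk fun n => (Set.ncard {V : List A | MinContainer E W V ∧ wt w V = n} : ℤ)

theorem aux_wt_append {A : Type*} (w : A → ℕ) (V : List A) (a : A) :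
    wt w (V ++ [a]) = wt w V + w a := by
  simp [wt]

theorem aux_finite_wt {A : Type*} (w : A → ℕ)
    (hw : ∀ a, 0 < w a) (hfin : ∀ n, {a : A | w a = n}.Finite) (n : ℕ) :
    {V : List A | wt w V = n}.Finite := by
  induction n using Nat.strong_induction_on with
  | _ n ih =>
    have h1 : (⋃ p ∈ {p : ℕ × ℕ | p.1 < n ∧ p.2 ≤ n},
        Set.image2 (fun (V : List A) a => V ++ [a]) {V | wt w V = p.1} {a | w a = p.2}).Finite := by
      refine Set.Finite.biUnion ?_ ?_
      · exact ((Set.finite_lt_nat n).prod (Set.finite_le_nat n)).subset (fun p hp => hp)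
      · intro p hp
        exact (ih p.1 hp.1).image2 _ (hfin p.2)
    refine (h1.union (Set.finite_singleton [])).subset ?_
    intro V hV
    rcases List.eq_nil_or_concat V with rfl | ⟨V₂, a, rfl⟩
    · right; rfl
    · left
      have hV : wt w (V₂ ++ [a]) = n := by simpa using hV
      rw [aux_wt_append] at hV
      have := hw a
      simp only [Set.mem_iUnion]
      refine ⟨(wt w V₂, w a), ⟨?_, ?_⟩, V₂, rfl, a, rfl, by simp⟩ <;> simp <;> omega

theorem aux_le_append_one {A : Type*} {w : A → ℕ} (E : EmbeddingOrder A w) {W V : List A}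
    (h : E.le W V) (a : A) : E.le W (V ++ [a]) := by
  obtain ⟨Ws, hl, hf, hq⟩ := (E.le_iff_factor W V).1 h
  refine (E.le_iff_factor _ _).2 ⟨Ws ++ [[]], by simp [hl], by simp [hf], ?_⟩
  intro q hmem
  rw [List.zip_append hl, List.mem_append] at hmem
  rcases hmem with h | h
  · exact hq q h
  · simp at h
    subst h
    exact E.nil_le _

theorem aux_le_append {A : Type*} {w : A → ℕ} (E : EmbeddingOrder A w) {W V : List A}
    (h : E.le W V) (U : List A) : E.le W (V ++ U) := by
  induction U using List.reverseRecOn with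
  | nil => simpa using h
  | append_singleton U a ih =>
    rw [← List.append_assoc]
    exact aux_le_append_one E ih a

theorem aux_min_append {A : Type*} {w : A → ℕ} (E : EmbeddingOrder A w) {W V : List A} {a : A} :
    MinContainer E W (V ++ [a]) ↔ E.le W (V ++ [a]) ∧ ¬ E.le W V := by
  constructor
  · rintro ⟨h1, h2⟩
    exact ⟨h1, h2 V (List.prefix_append _ _) (by simp)⟩
  · rintro ⟨h1, h2⟩
    refine ⟨h1, fun P hP hne hle => h2 ?_⟩
    rcases List.prefix_concat_iff.1 hP with h | ⟨U, rfl⟩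
    · exact absurd h hne
    · exact aux_le_append E hle U

theorem aux_main {A : Type*} (w : A → ℕ)
    (hw : ∀ a, 0 < w a) (hfin : ∀ n, {a : A | w a = n}.Finite)
    (E : EmbeddingOrder A w) (W : List A) :
    Iser w E W = IserStar w E W + Iser w E W * Aser A w := by
  classical
  ext n
  have hF : ∀ n, {V : List A | E.le W V ∧ wt w V = n}.Finite := fun n =>
    (aux_finite_wt w hw hfin n).subset fun V h => h.2
  have hM : {V : List A | MinContainer E W V ∧ wt w V = n}.Finite :=
    (aux_finite_wt w hw hfin n).subset fun V h => h.2
  simp only [map_add, PowerSeries.coeff_mul, Iser, IserStar, Aser, PowerSeries.coeff_mk]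
  set f : List A × A → List A := fun p => p.1 ++ [p.2] with hf
  have hinj : Function.Injective f := by
    rintro ⟨V, a⟩ ⟨V₂, a₂⟩ h
    simpa [hf] using h
  let Q : Finset (List A × A) := (Finset.HasAntidiagonal.antidiagonal n).biUnion fun p =>
    (hF p.1).toFinset ×ˢ (hfin p.2).toFinset
  have hQ : Q.card = ∑ p ∈ Finset.HasAntidiagonal.antidiagonal n,
      Set.ncard {V : List A | E.le W V ∧ wt w V = p.1} * Set.ncard {a : A | w a = p.2} := by
    rw [Finset.card_biUnion]
    · refine Finset.sum_congr rfl fun p _ => ?_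
      rw [Finset.card_product, Set.ncard_eq_toFinset_card _ (hF p.1),
        Set.ncard_eq_toFinset_card _ (hfin p.2)]
    · intro p _ q _ hpq
      rw [Function.onFun, Finset.disjoint_left]
      rintro ⟨V, a⟩ h1 h2
      simp at h1 h2
      exact hpq (Prod.ext (h1.1.2.symm.trans h2.1.2) (h1.2.symm.trans h2.2))
  have hmemQ : ∀ V a, (V, a) ∈ Q ↔ E.le W V ∧ wt w V + w a = n := by
    intro V a
    simp only [Q, Finset.mem_biUnion, Finset.mem_product, Set.Finite.mem_toFinset,
      Set.mem_ofPred_eq, Finset.HasAntidiagonal.mem_antidiagonal]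
    constructor
    · rintro ⟨p, hp, ⟨h1, h2⟩, h3⟩
      exact ⟨h1, by omega⟩
    · rintro ⟨h1, h2⟩
      exact ⟨(wt w V, w a), h2, ⟨h1, rfl⟩, rfl⟩
  have hset : {V : List A | E.le W V ∧ wt w V = n} =
      {V : List A | MinContainer E W V ∧ wt w V = n} ∪ f '' (Q : Set (List A × A)) := by
    ext V
    rcases List.eq_nil_or_concat V with rfl | ⟨V, a, rfl⟩
    · simp [MinContainer, hf]
    · have : V ++ [a] ∈ f '' (Q : Set (List A × A)) ↔ (V, a) ∈ Q := by
        rw [show V ++ [a] = f (V, a) from rfl, hinj.mem_set_image, Finset.mem_coe]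
      rw [List.concat_eq_append, Set.mem_union, this, hmemQ]
      simp only [Set.mem_ofPred_eq, aux_min_append, aux_wt_append]
      have := @aux_le_append_one A w E W V
      by_cases h : E.le W V
      · simp [h, this h a]
      · simp [h]
  have hdisj : Disjoint {V : List A | MinContainer E W V ∧ wt w V = n}
      (f '' (Q : Set (List A × A))) := by
    rw [Set.disjoint_left]
    rintro _ ⟨h1, _⟩ ⟨⟨V, a⟩, h2, rfl⟩
    exact (aux_min_append E).1 h1 |>.2 ((hmemQ V a).1 h2).1
  have hcard : Set.ncard {V : List A | E.le W V ∧ wt w V = n} =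
      Set.ncard {V : List A | MinContainer E W V ∧ wt w V = n} + Q.card := by
    rw [hset, Set.ncard_union_eq hdisj hM (Q.finite_toSet.image f),
      Set.ncard_image_of_injective _ hinj, Set.ncard_coe_finset]
  rw [hcard, hQ]
  push_cast
  rfl

/-- **Observation `obs-IW-vs-IWstar`.**  For an embedding order on words over a weighted
alphabet (positive weights, finitely many letters of each weight), for every word `W` one
has `I_W(x) = I*_W(x)/(1 − A(x))` as formal power series (stated multiplicatively:
`I_W(x)·(1 − A(x)) = I*_W(x)`); in particular, for all `W, V`,
`I_W(x) = I_V(x)` if and only if `I*_W(x) = I*_V(x)`. -/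
theorem Iser_eq_IserStar_div_one_sub_Aser {A : Type*} (w : A → ℕ)
    (hw : ∀ a, 0 < w a) (hfin : ∀ n, {a : A | w a = n}.Finite)
    (E : EmbeddingOrder A w) (W : List A) :
    Iser w E W * (1 - Aser A w) = IserStar w E W ∧
      ∀ V : List A, (Iser w E W = Iser w E V ↔ IserStar w E W = IserStar w E V) := by
  have key : ∀ U, Iser w E U * (1 - Aser A w) = IserStar w E U := fun U => by
    linear_combination aux_main w hw hfin E U
  refine ⟨key W, fun V => ⟨fun h => by rw [← key, ← key, h], fun h => ?_⟩⟩
  rw [← key, ← key] at h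
  refine mul_right_cancel₀ ?_ h
  intro h0
  have h1 := congrArg (PowerSeries.coeff 0) h0
  have h2 : {a : A | w a = 0} = ∅ := by
    ext a
    simpa using (hw a).ne'
  simp [Aser, h2] at h1
end

section
/- Let ≤ be an embedding order on A*. If W = W₁W₂⋯W_k is an incompatible factorisation, then I_W(x) = (∏_{i=1}^k I*_{W_i}(x)) / (1 − A(x)) as formal power series. -/
/-- The ordered pair `(a, b)` of letters is *incompatible* if there is no letter `c`
with `ab ≤ c`. -/
def Incompat {A : Type*} {w : A → ℕ} (E : EmbeddingOrder A w) (a b : A) : Prop :=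
  ¬ ∃ c : A, E.le [a, b] [c]

/-- A factorisation (a list of nonempty factors) is *incompatible* if the last letter of
each factor together with the first letter of the next factor form an incompatible pair. -/
def IncompatFactorisation {A : Type*} {w : A → ℕ} (E : EmbeddingOrder A w)
    (Ws : List (List A)) : Prop :=
  (∀ U ∈ Ws, U ≠ []) ∧
    Ws.Chain' fun U V => ∀ a b : A, U.getLast? = some a → V.head? = some b → Incompat E a b


section Helpers

variable {A : Type*} {w : A → ℕ}

theorem emb_le_nil (E : EmbeddingOrder A w) {W : List A} (h : E.le W []) : W = [] :=
  E.le_antisymm h (E.nil_le W)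

theorem emb_le_cons (E : EmbeddingOrder A w) (W : List A) (v : A) (V : List A) :
    E.le W (v :: V) ↔ ∃ X Y, W = X ++ Y ∧ E.le X [v] ∧ E.le Y V := by
  constructor
  · intro h
    obtain ⟨Xs, hl, hf, hz⟩ := (E.le_iff_factor _ _).1 h
    cases Xs with
    | nil => simp at hl
    | cons X Xs =>
      refine ⟨X, Xs.flatten, by simpa using hf.symm, hz (X, v) (by simp), ?_⟩
      refine (E.le_iff_factor _ _).2 ⟨Xs, by simpa using hl, rfl, fun q hq => hz q ?_⟩
      simp [hq]
  · rintro ⟨X, Y, rfl, hX, hY⟩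
    obtain ⟨Xs, hl, hf, hz⟩ := (E.le_iff_factor _ _).1 hY
    refine (E.le_iff_factor _ _).2 ⟨X :: Xs, by simp [hl], by simp [hf], ?_⟩
    intro q hq
    simp only [List.zip_cons_cons, List.mem_cons] at hq
    rcases hq with rfl | hq
    · exact hX
    · exact hz q hq

theorem emb_le_append (E : EmbeddingOrder A w) {W₁ W₂ V₁ V₂ : List A}
    (h₁ : E.le W₁ V₁) (h₂ : E.le W₂ V₂) : E.le (W₁ ++ W₂) (V₁ ++ V₂) := by
  induction V₁ generalizing W₁ with
  | nil => rw [emb_le_nil E h₁]; simpa using h₂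
  | cons v V ih =>
    obtain ⟨X, Y, rfl, hX, hY⟩ := (emb_le_cons E _ _ _).1 h₁
    exact (emb_le_cons E _ _ _).2 ⟨X, Y ++ W₂, by simp, hX, ih hY⟩

theorem emb_le_append_right (E : EmbeddingOrder A w) {W V : List A} (T : List A)
    (h : E.le W V) : E.le W (V ++ T) := by
  simpa using emb_le_append E h (E.nil_le T)

theorem emb_le_append_left (E : EmbeddingOrder A w) {W V : List A} (T : List A)
    (h : E.le W V) : E.le W (T ++ V) := by
  simpa using emb_le_append E (E.nil_le T) h

theorem emb_split (E : EmbeddingOrder A w) {U R V : List A}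
    (hinc : ∀ a b : A, U.getLast? = some a → R.head? = some b → Incompat E a b)
    (h : E.le (U ++ R) V) : ∃ V₁ V₂, V = V₁ ++ V₂ ∧ E.le U V₁ ∧ E.le R V₂ := by
  induction V generalizing U with
  | nil =>
    have := emb_le_nil E h
    simp only [List.append_eq_nil_iff] at this
    obtain ⟨rfl, rfl⟩ := this
    exact ⟨[], [], rfl, E.le_refl _, E.le_refl _⟩
  | cons v V ih =>
    obtain ⟨X, Y, he, hX, hY⟩ := (emb_le_cons E _ _ _).1 h
    rcases List.append_eq_append_iff.1 he with ⟨R', rfl, rfl⟩ | ⟨U', rfl, rfl⟩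
    · rcases R' with _ | ⟨b, R'⟩
      · exact ⟨[v], V, rfl, by simpa using hX, by simpa using hY⟩
      · rcases List.eq_nil_or_concat U with rfl | ⟨U', a, rfl⟩
        · exact ⟨[], v :: V, rfl, E.le_refl _, by simpa using h⟩
        · exfalso
          refine hinc a b (by simp) (by simp) ⟨v, E.le_trans ?_ hX⟩
          have : E.le [a, b] (U' ++ ([a, b] ++ R')) :=
            emb_le_append_left E _ (emb_le_append_right E _ (E.le_refl _))
          simpa using this
    · rcases List.eq_nil_or_concat U' with rfl | ⟨U'', a, rfl⟩
      · exact ⟨[v], V, rfl, by simpa using hX, by simpa using hY⟩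
      · obtain ⟨V₁, V₂, rfl, h₁, h₂⟩ := ih (U := U'' ++ [a]) (by
          intro c d hc hd
          refine hinc c d ?_ hd
          simpa using hc) (by simpa using hY)
        exact ⟨v :: V₁, V₂, rfl, (emb_le_cons E _ _ _).2 ⟨X, _, by simp, hX, h₁⟩, h₂⟩

theorem exists_min_prefix (E : EmbeddingOrder A w) {W V : List A} (h : E.le W V) :
    ∃ P T, V = P ++ T ∧ MinContainer E W P := by
  induction hn : V.length using Nat.strong_induction_on generalizing V with
  | _ n ih =>
    by_cases hm : MinContainer E W V
    · exact ⟨V, [], by simp, hm⟩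
    · simp only [MinContainer, not_and, not_forall, not_not] at hm
      obtain ⟨P, ⟨T, hP⟩, hne, hle⟩ := hm h
      have hT : T ≠ [] := by rintro rfl; exact hne (by simpa using hP)
      have := List.length_pos_iff.2 hT
      obtain ⟨Q, S, rfl, hQ⟩ := ih P.length (by rw [← hn, ← hP]; simp; omega) hle rfl
      exact ⟨Q, S ++ T, by simp [← hP], hQ⟩

theorem min_unique (E : EmbeddingOrder A w) {W P P' V : List A}
    (h : MinContainer E W P) (h' : MinContainer E W P') (hp : P <+: V) (hp' : P' <+: V) :
    P = P' := by
  by_contra hne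
  rcases List.prefix_or_prefix_of_prefix hp hp' with hh | hh
  · exact h'.2 P hh hne h.1
  · exact h.2 P' hh (Ne.symm hne) h'.1

theorem min_append (E : EmbeddingOrder A w) {U R V₁ V₂ : List A}
    (hinc : ∀ a b : A, U.getLast? = some a → R.head? = some b → Incompat E a b)
    (h₁ : MinContainer E U V₁) (h₂ : MinContainer E R V₂) :
    MinContainer E (U ++ R) (V₁ ++ V₂) := by
  refine ⟨emb_le_append E h₁.1 h₂.1, fun P hP hne hle => ?_⟩
  obtain ⟨P₁, P₂, rfl, hU, hR⟩ := emb_split E hinc hle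
  have hp : P₁ <+: V₁ ++ V₂ := (List.prefix_append _ _).trans hP
  have hV : V₁ <+: P₁ := by
    rcases List.prefix_or_prefix_of_prefix hp (List.prefix_append V₁ V₂) with hh | hh
    · by_cases he : P₁ = V₁
      · rw [he]
      · exact absurd hU (h₁.2 _ hh he)
    · exact hh
  obtain ⟨T, rfl⟩ := hV
  rw [List.append_assoc] at hP hne
  refine h₂.2 (T ++ P₂) ((List.prefix_append_right_inj _).1 hP) ?_ (emb_le_append_left E _ hR)
  intro he
  exact hne (by rw [he])

theorem min_split (E : EmbeddingOrder A w) {U R V : List A}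
    (hinc : ∀ a b : A, U.getLast? = some a → R.head? = some b → Incompat E a b)
    (h : MinContainer E (U ++ R) V) :
    ∃ V₁ V₂, V = V₁ ++ V₂ ∧ MinContainer E U V₁ ∧ MinContainer E R V₂ := by
  obtain ⟨V₁, V₂, rfl, hU, hR⟩ := emb_split E hinc h.1
  obtain ⟨P, T, rfl, hP⟩ := exists_min_prefix E hU
  refine ⟨P, T ++ V₂, by simp, hP, emb_le_append_left E _ hR, fun Q hQ hne hle => ?_⟩
  refine h.2 (P ++ Q) ?_ ?_ (emb_le_append E hP.1 hle)
  · rw [List.append_assoc]; exact (List.prefix_append_right_inj _).2 hQ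
  · intro he
    rw [List.append_assoc] at he
    exact hne (List.append_cancel_left he)

theorem wt_append (V₁ V₂ : List A) : wt w (V₁ ++ V₂) = wt w V₁ + wt w V₂ := by
  simp [wt]

theorem finite_wt (hw : ∀ a, 0 < w a) (hfin : ∀ n, {a : A | w a = n}.Finite) (n : ℕ) :
    {V : List A | wt w V ≤ n}.Finite := by
  have hA : ∀ n, {a : A | w a ≤ n}.Finite := by
    intro n
    refine ((Set.finite_Iic n).biUnion fun k _ => hfin k).subset ?_
    intro a ha
    simpa using ha
  induction n with
  | zero =>
    refine (Set.finite_singleton ([] : List A)).subset ?_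
    rintro (_ | ⟨a, V⟩) hV
    · simp
    · have := hw a
      simp [wt] at hV
      omega
  | succ n ih =>
    refine ((Set.finite_singleton ([] : List A)).union
      (Set.Finite.image2 List.cons (hA (n+1)) ih)).subset ?_
    rintro (_ | ⟨a, V⟩) hV
    · simp
    · right
      have := hw a
      simp [wt] at hV
      exact ⟨a, by simp; omega, V, by simp [wt]; omega, rfl⟩

/-- Generating function of a set of words. -/
noncomputable def wordGF (w : A → ℕ) (S : Set (List A)) : PowerSeries ℤ :=
  PowerSeries.mk fun n => (Set.ncard {V : List A | V ∈ S ∧ wt w V = n} : ℤ)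

theorem wordGF_mul (hw : ∀ a, 0 < w a) (hfin : ∀ n, {a : A | w a = n}.Finite)
    (S T Q : Set (List A))
    (hmem : ∀ V₁ ∈ S, ∀ V₂ ∈ T, V₁ ++ V₂ ∈ Q)
    (hex : ∀ V ∈ Q, ∃ V₁ ∈ S, ∃ V₂ ∈ T, V₁ ++ V₂ = V)
    (huniq : ∀ V₁ ∈ S, ∀ V₁' ∈ S, ∀ V₂ V₂', V₁ ++ V₂ = V₁' ++ V₂' → V₁ = V₁') :
    wordGF w Q = wordGF w S * wordGF w T := by
  have hf : ∀ (S : Set (List A)) n, {V : List A | V ∈ S ∧ wt w V = n}.Finite := fun S n =>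
    (finite_wt hw hfin n).subset fun V hV => hV.2.le
  ext n
  rw [PowerSeries.coeff_mul]
  simp only [wordGF, PowerSeries.coeff_mk]
  simp only [Set.ncard_eq_toFinset_card _ (hf _ _)]
  simp only [← Nat.cast_mul, ← Finset.card_product, ← Nat.cast_sum, ← Finset.card_sigma]
  congr 1
  symm
  refine Finset.card_bij (fun x _ => x.2.1 ++ x.2.2) ?_ ?_ ?_
  · rintro ⟨⟨i, j⟩, V₁, V₂⟩ h
    simp only [Finset.mem_sigma, Finset.HasAntidiagonal.mem_antidiagonal, Finset.mem_product,
      Set.Finite.mem_toFinset, Set.mem_ofPred_eq] at h ⊢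
    obtain ⟨rfl, ⟨h1, rfl⟩, h2, rfl⟩ := h
    exact ⟨hmem _ h1 _ h2, wt_append _ _⟩
  · rintro ⟨⟨i, j⟩, V₁, V₂⟩ h ⟨⟨i', j'⟩, V₁', V₂'⟩ h' he
    simp only [Finset.mem_sigma, Finset.HasAntidiagonal.mem_antidiagonal, Finset.mem_product,
      Set.Finite.mem_toFinset, Set.mem_ofPred_eq] at h h' he
    obtain ⟨rfl, ⟨h1, rfl⟩, h2, rfl⟩ := h
    obtain ⟨-, ⟨h1', rfl⟩, h2', rfl⟩ := h'
    obtain rfl := huniq _ h1 _ h1' _ _ he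
    obtain rfl := List.append_cancel_left he
    rfl
  · intro V hV
    simp only [Set.Finite.mem_toFinset, Set.mem_ofPred_eq] at hV
    obtain ⟨hQ, rfl⟩ := hV
    obtain ⟨V₁, h1, V₂, h2, rfl⟩ := hex V hQ
    refine ⟨⟨(wt w V₁, wt w V₂), V₁, V₂⟩, ?_, rfl⟩
    simp [h1, h2, wt_append]

theorem wordGF_nil : wordGF w {[]} = 1 := by
  ext n
  simp only [wordGF, PowerSeries.coeff_mk, PowerSeries.coeff_one, Set.mem_singleton_iff]
  split_ifs with h
  · subst h
    have : {V : List A | V = [] ∧ wt w V = 0} = {[]} := by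
      ext V; simp only [Set.mem_ofPred_eq, Set.mem_singleton_iff, and_iff_left_iff_imp]
      rintro rfl; rfl
    rw [this]; simp
  · have : {V : List A | V = [] ∧ wt w V = n} = ∅ := by
      ext V; simp only [Set.mem_ofPred_eq, Set.mem_empty_iff_false, iff_false, not_and]
      rintro rfl h'; exact h h'.symm
    rw [this]; simp

theorem wordGF_letters : wordGF w (Set.range fun a : A => [a]) = Aser A w := by
  ext n
  simp only [wordGF, Aser, PowerSeries.coeff_mk]
  have : {V : List A | V ∈ (Set.range fun a : A => [a]) ∧ wt w V = n}
      = (fun a : A => [a]) '' {a : A | w a = n} := by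
    ext V
    constructor
    · rintro ⟨⟨a, rfl⟩, h⟩
      exact ⟨a, by simpa [wt] using h, rfl⟩
    · rintro ⟨a, h, rfl⟩
      exact ⟨⟨a, rfl⟩, by simpa [wt] using h⟩
  rw [this, Set.ncard_image_of_injective _ (fun a b h => by simpa using h)]

theorem wordGF_univ (hw : ∀ a, 0 < w a) (hfin : ∀ n, {a : A | w a = n}.Finite) :
    wordGF w (Set.univ : Set (List A)) = 1 + Aser A w * wordGF w Set.univ := by
  have hf : ∀ (S : Set (List A)) n, {V : List A | V ∈ S ∧ wt w V = n}.Finite := fun S n =>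
    (finite_wt hw hfin n).subset fun V hV => hV.2.le
  rw [← wordGF_letters, ← wordGF_nil (w := w),
    ← wordGF_mul hw hfin (Set.range fun a : A => [a]) Set.univ {V | V ≠ []}]
  · ext n
    simp only [wordGF, PowerSeries.coeff_mk, map_add]
    rw [← Nat.cast_add, ← Set.ncard_union_eq _ (hf _ _) (hf _ _)]
    · congr 2
      ext V
      simp only [Set.mem_ofPred_eq, Set.mem_union, Set.mem_univ, Set.mem_singleton_iff]
      tauto
    · rw [Set.disjoint_left]
      rintro V ⟨h, -⟩ ⟨h', -⟩
      exact h' h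
  · rintro _ ⟨a, rfl⟩ V -
    simp
  · rintro (_ | ⟨a, V⟩) hV
    · exact absurd rfl hV
    · exact ⟨[a], ⟨a, rfl⟩, V, trivial, rfl⟩
  · rintro _ ⟨a, rfl⟩ _ ⟨b, rfl⟩ V V' h
    simp at h
    simp [h.1]

theorem IserStar_append (hw : ∀ a, 0 < w a) (hfin : ∀ n, {a : A | w a = n}.Finite)
    (E : EmbeddingOrder A w) {U R : List A}
    (hinc : ∀ a b : A, U.getLast? = some a → R.head? = some b → Incompat E a b) :
    IserStar w E (U ++ R) = IserStar w E U * IserStar w E R := by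
  refine wordGF_mul hw hfin {V | MinContainer E U V} {V | MinContainer E R V}
    {V | MinContainer E (U ++ R) V} ?_ ?_ ?_
  · intro V₁ h₁ V₂ h₂
    exact min_append E hinc h₁ h₂
  · intro V hV
    obtain ⟨V₁, V₂, rfl, h₁, h₂⟩ := min_split E hinc hV
    exact ⟨V₁, h₁, V₂, h₂, rfl⟩
  · intro V₁ h V₁' h' V₂ V₂' he
    exact min_unique E h h' (List.prefix_append _ V₂) (he ▸ List.prefix_append _ _)

theorem IserStar_nil (E : EmbeddingOrder A w) : IserStar w E [] = 1 := by
  rw [← wordGF_nil (w := w)]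
  have : ({[]} : Set (List A)) = {V | MinContainer E [] V} := by
    ext V
    constructor
    · rintro rfl
      exact ⟨E.le_refl _, fun P hP hne => absurd (List.prefix_nil.1 hP) hne⟩
    · intro h
      by_contra hne
      exact h.2 [] List.nil_prefix (fun he => hne he.symm) (E.le_refl _)
  rw [this]
  rfl

theorem Iser_eq (hw : ∀ a, 0 < w a) (hfin : ∀ n, {a : A | w a = n}.Finite)
    (E : EmbeddingOrder A w) (W : List A) :
    Iser w E W * (1 - Aser A w) = IserStar w E W := by
  have h : Iser w E W = IserStar w E W * wordGF w Set.univ := by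
    refine wordGF_mul hw hfin {V | MinContainer E W V} Set.univ {V | E.le W V} ?_ ?_ ?_
    · intro V₁ h₁ V₂ _
      exact emb_le_append_right E _ h₁.1
    · intro V hV
      obtain ⟨P, T, rfl, hP⟩ := exists_min_prefix E hV
      exact ⟨P, hP, T, trivial, rfl⟩
    · intro V₁ h V₁' h' V₂ V₂' he
      exact min_unique E h h' (List.prefix_append _ V₂) (he ▸ List.prefix_append _ _)
  have h2 := wordGF_univ hw hfin
  rw [h]
  linear_combination (IserStar w E W) * h2

theorem IserStar_flatten (hw : ∀ a, 0 < w a) (hfin : ∀ n, {a : A | w a = n}.Finite)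
    (E : EmbeddingOrder A w) (Ws : List (List A)) (hinc : IncompatFactorisation E Ws) :
    IserStar w E Ws.flatten = (Ws.map (IserStar w E)).prod := by
  induction Ws with
  | nil => simpa using IserStar_nil E
  | cons U Ws ih =>
    obtain ⟨hne, hch⟩ := hinc
    have ih' := ih ⟨fun V hV => hne V (List.mem_cons_of_mem _ hV), List.IsChain.tail hch⟩
    rw [List.flatten_cons, IserStar_append hw hfin E, ih', List.map_cons, List.prod_cons]
    intro a b ha hb
    rcases Ws with _ | ⟨R, Ws⟩
    · simp at hb
    · have hR := hne R (by simp)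
      rcases R with _ | ⟨r, R⟩
      · exact absurd rfl hR
      · exact (List.isChain_cons_cons.1 hch).1 a b ha (by simpa using hb)

end Helpers

/-- **Proposition `prop-incompatible-factorisation`.**  If `W = W₁W₂⋯W_k` is an
incompatible factorisation, then `I_W(x) = (∏_{i=1}^k I*_{W_i}(x)) / (1 − A(x))`
as formal power series (stated multiplicatively). -/
theorem Iser_of_incompatFactorisation {A : Type*} (w : A → ℕ)
    (hw : ∀ a, 0 < w a) (hfin : ∀ n, {a : A | w a = n}.Finite)
    (E : EmbeddingOrder A w)
    (Ws : List (List A)) (hne : Ws ≠ []) (hinc : IncompatFactorisation E Ws) :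
    Iser w E Ws.flatten * (1 - Aser A w) = (Ws.map (IserStar w E)).prod := by
  rw [Iser_eq hw hfin, IserStar_flatten hw hfin E Ws hinc]
end

section
/- Let ≤ be an embedding order on A*. Suppose that for 1 ≤ i ≤ k the words W_i and V_i satisfy I_{W_i}(x) = I_{V_i}(x), and let π be a permutation of {1,…,k}. If both factorisations W = W₁W₂⋯W_k and V = V_{π(1)}V_{π(2)}⋯V_{π(k)} are incompatible, then I_W(x) = I_V(x). -/
namespace IncShuffle

/-- Generating function of a set of words. -/
noncomputable def gf {A : Type*} (w : A → ℕ) (S : Set (List A)) : PowerSeries ℤ :=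
  PowerSeries.mk fun n => (Set.ncard {V : List A | V ∈ S ∧ wt w V = n} : ℤ)

theorem wt_append {A : Type*} (w : A → ℕ) (U V : List A) :
    wt w (U ++ V) = wt w U + wt w V := by
  simp [wt]

theorem finite_wt {A : Type*} (w : A → ℕ)
    (hw : ∀ a, 0 < w a) (hfin : ∀ n, {a : A | w a = n}.Finite) (n : ℕ) :
    {V : List A | wt w V = n}.Finite := by
  induction n using Nat.strong_induction_on with
  | _ n ih =>
    have h : {V : List A | wt w V = n} ⊆ {[]} ∪ ⋃ m ∈ Set.Iio n,
        Set.image2 List.cons {a | w a = n - m} {V | wt w V = m} := by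
      intro V hV
      cases V with
      | nil => left; rfl
      | cons a V =>
        right
        have h1 : w a + wt w V = n := by simpa [wt] using hV
        have h2 := hw a
        simp only [Set.mem_iUnion]
        refine ⟨wt w V, ?_, a, ?_, V, rfl, rfl⟩
        · simp only [Set.mem_Iio]; omega
        · simp only [Set.mem_ofPred_eq]; omega
    refine Set.Finite.subset ?_ h
    refine (Set.finite_singleton _).union ?_
    refine (Set.finite_Iio n).biUnion ?_
    intro m hm
    exact (hfin _).image2 _ (ih m hm)

theorem gf_mul {A : Type*} (w : A → ℕ)
    (hw : ∀ a, 0 < w a) (hfin : ∀ n, {a : A | w a = n}.Finite)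
    (R S T : Set (List A))
    (hR : ∀ X, X ∈ R ↔ ∃ P Q, P ∈ S ∧ Q ∈ T ∧ P ++ Q = X)
    (hS : ∀ P P' X, P ∈ S → P' ∈ S → P <+: X → P' <+: X → P = P') :
    gf w R = gf w S * gf w T := by
  classical
  have fin : ∀ (S : Set (List A)) n, {V : List A | V ∈ S ∧ wt w V = n}.Finite :=
    fun S n => (finite_wt w hw hfin n).subset fun V h => h.2
  ext n
  rw [PowerSeries.coeff_mul]
  simp only [gf, PowerSeries.coeff_mk]
  let F : ℕ × ℕ → Finset (List A × List A) := fun p => (fin S p.1).toFinset ×ˢ (fin T p.2).toFinset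
  have hc : ∀ p, ((F p).card : ℤ) = (Set.ncard {V : List A | V ∈ S ∧ wt w V = p.1} : ℤ) *
      (Set.ncard {V : List A | V ∈ T ∧ wt w V = p.2} : ℤ) := by
    intro p
    rw [Finset.card_product, Set.ncard_eq_toFinset_card _ (fin S p.1),
      Set.ncard_eq_toFinset_card _ (fin T p.2)]
    push_cast; rfl
  simp only [← hc]
  rw [← Nat.cast_sum, ← Finset.card_biUnion]
  · rw [Set.ncard_eq_toFinset_card _ (fin R n)]
    congr 1
    symm
    apply Finset.card_bij (fun (p : List A × List A) _ => p.1 ++ p.2)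
    · rintro ⟨P, Q⟩ h
      simp only [F, Finset.mem_biUnion, Finset.mem_product, Set.Finite.mem_toFinset,
        Set.mem_ofPred_eq] at h ⊢
      obtain ⟨⟨i, j⟩, hij, ⟨h1, h2⟩, h3, h4⟩ := h
      refine ⟨(hR _).2 ⟨P, Q, h1, h3, rfl⟩, ?_⟩
      rw [wt_append, h2, h4]; exact Finset.HasAntidiagonal.mem_antidiagonal.1 hij
    · rintro ⟨P, Q⟩ h ⟨P', Q'⟩ h' he
      simp only [F, Finset.mem_biUnion, Finset.mem_product, Set.Finite.mem_toFinset,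
        Set.mem_ofPred_eq] at h h' he
      obtain ⟨_, _, ⟨h1, _⟩, _, _⟩ := h
      obtain ⟨_, _, ⟨h1', _⟩, _, _⟩ := h'
      have := hS P P' (P ++ Q) h1 h1' (List.prefix_append _ _) (he ▸ List.prefix_append _ _)
      subst this
      simpa using he
    · intro X hX
      simp only [Set.Finite.mem_toFinset, Set.mem_ofPred_eq] at hX
      obtain ⟨P, Q, hP, hQ, rfl⟩ := (hR X).1 hX.1
      refine ⟨(P, Q), ?_, rfl⟩
      simp only [F, Finset.mem_biUnion, Finset.mem_product, Set.Finite.mem_toFinset,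
        Set.mem_ofPred_eq]
      refine ⟨(wt w P, wt w Q), ?_, ⟨hP, rfl⟩, hQ, rfl⟩
      rw [Finset.HasAntidiagonal.mem_antidiagonal, ← wt_append]; exact hX.2
  · rintro ⟨i, j⟩ _ ⟨i', j'⟩ _ hne
    simp only [Function.onFun]
    rw [Finset.disjoint_left]
    rintro ⟨P, Q⟩ h h'
    simp only [F, Finset.mem_product, Set.Finite.mem_toFinset, Set.mem_ofPred_eq] at h h'
    apply hne
    rw [← h.1.2, ← h.2.2, ← h'.1.2, ← h'.2.2]

variable {A : Type*} {w : A → ℕ} (E : EmbeddingOrder A w)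

theorem le_cons_iff (W : List A) (c : A) (X : List A) :
    E.le W (c :: X) ↔ ∃ T R, W = T ++ R ∧ E.le T [c] ∧ E.le R X := by
  rw [E.le_iff_factor]
  constructor
  · rintro ⟨Ws, hl, hf, hq⟩
    cases Ws with
    | nil => simp at hl
    | cons T Ws =>
      refine ⟨T, Ws.flatten, by simpa using hf.symm, hq (T, c) (by simp), ?_⟩
      rw [E.le_iff_factor]
      exact ⟨Ws, by simpa using hl, rfl, fun q h => hq q (by simp [h])⟩
  · rintro ⟨T, R, rfl, hT, hR⟩
    rw [E.le_iff_factor] at hR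
    obtain ⟨Ws, hl, hf, hq⟩ := hR
    refine ⟨T :: Ws, by simp [hl], by simp [hf], ?_⟩
    intro q h
    rw [List.zip_cons_cons, List.mem_cons] at h
    rcases h with rfl | h
    · exact hT
    · exact hq q h

theorem le_nil {W : List A} (h : E.le W []) : W = [] := E.le_antisymm h (E.nil_le W)

theorem le_append {U V P Q : List A} (h1 : E.le U P) (h2 : E.le V Q) :
    E.le (U ++ V) (P ++ Q) := by
  induction P generalizing U with
  | nil => rw [le_nil E h1]; exact h2
  | cons c P ih =>
    rw [le_cons_iff] at h1
    obtain ⟨T, R, rfl, hT, hR⟩ := h1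
    rw [List.cons_append, le_cons_iff]
    exact ⟨T, R ++ V, by simp, hT, ih hR⟩

theorem le_of_prefix {W P X : List A} (h : E.le W P) (hp : P <+: X) : E.le W X := by
  obtain ⟨Q, rfl⟩ := hp
  simpa using le_append E h (E.nil_le Q)

theorem le_append_left {W P : List A} (X : List A) (h : E.le W P) : E.le W (X ++ P) := by
  simpa using le_append E (E.nil_le X) h

theorem exists_min {W X : List A} (h : E.le W X) : ∃ P, P <+: X ∧ MinContainer E W P := by
  induction hn : X.length using Nat.strong_induction_on generalizing X with
  | _ n ih =>
    by_cases hm : MinContainer E W X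
    · exact ⟨X, List.prefix_refl _, hm⟩
    · simp only [MinContainer, not_and, not_forall, not_not] at hm
      obtain ⟨P, hP, hne, hle⟩ := hm h
      have hlt : P.length < n := by
        rcases Nat.lt_or_ge P.length n with h | h
        · exact h
        · exact absurd (hP.eq_of_length_le (by omega)) hne
      obtain ⟨P', h1, h2⟩ := ih _ hlt hle rfl
      exact ⟨P', h1.trans hP, h2⟩

theorem min_unique (W : List A) (P P' X : List A) (h : MinContainer E W P)
    (h' : MinContainer E W P') (hp : P <+: X) (hp' : P' <+: X) : P = P' := by
  rcases List.prefix_or_prefix_of_prefix hp hp' with hh | hh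
  · by_contra hne
    exact h'.2 P hh hne h.1
  · by_contra hne
    exact h.2 P' hh (Ne.symm hne) h'.1

theorem split {U V X : List A} (hU : U ≠ [])
    (hinc : ∀ a b : A, U.getLast? = some a → V.head? = some b → Incompat E a b)
    (h : E.le (U ++ V) X) : ∃ P Q, X = P ++ Q ∧ E.le U P ∧ E.le V Q := by
  induction X generalizing U with
  | nil => exact absurd (List.append_eq_nil_iff.1 (le_nil E h)).1 hU
  | cons c X ih =>
    rw [le_cons_iff] at h
    obtain ⟨T, R, he, hT, hR⟩ := h
    rw [List.append_eq_append_iff] at he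
    rcases he with ⟨T', rfl, rfl⟩ | ⟨U', rfl, rfl⟩
    · cases T' with
      | nil => exact ⟨[c], X, rfl, by simpa using hT, by simpa using hR⟩
      | cons b T' =>
        exfalso
        obtain ⟨U0, a, rfl⟩ := U.eq_nil_or_concat.resolve_left hU
        refine hinc a b (by simp) (by simp) ⟨c, E.le_trans ?_ hT⟩
        have h1 : E.le [a, b] ([a, b] ++ T') := le_of_prefix E (E.le_refl _) (List.prefix_append _ _)
        have h2 := le_append_left E U0 h1
        simpa using h2
    · by_cases hU' : U' = []
      · subst hU'
        exact ⟨[c], X, rfl, by simpa using hT, by simpa using hR⟩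
      · obtain ⟨P, Q, rfl, hP, hQ⟩ := ih hU' (by
          intro a b ha hb
          refine hinc a b ?_ hb
          rw [List.getLast?_append, ha]; rfl) hR
        exact ⟨c :: P, Q, rfl, (le_cons_iff E _ _ _).2 ⟨T, U', rfl, hT, hP⟩, hQ⟩

theorem split_min {U V X : List A} (hU : U ≠ [])
    (hinc : ∀ a b : A, U.getLast? = some a → V.head? = some b → Incompat E a b)
    (h : E.le (U ++ V) X) : ∃ P Q, X = P ++ Q ∧ MinContainer E U P ∧ E.le V Q := by
  obtain ⟨P, Q, rfl, hP, hQ⟩ := split E hU hinc h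
  obtain ⟨P', ⟨S, rfl⟩, hP'⟩ := exists_min E hP
  exact ⟨P', S ++ Q, by simp, hP', le_append_left E S hQ⟩

theorem star_append (hw : ∀ a, 0 < w a) (hfin : ∀ n, {a : A | w a = n}.Finite)
    {U V : List A} (hU : U ≠ [])
    (hinc : ∀ a b : A, U.getLast? = some a → V.head? = some b → Incompat E a b) :
    IserStar w E (U ++ V) = IserStar w E U * IserStar w E V := by
  refine gf_mul w hw hfin {X | MinContainer E (U ++ V) X} {X | MinContainer E U X}
    {X | MinContainer E V X} ?_ (min_unique E U)
  intro X
  simp only [Set.mem_ofPred_eq]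
  constructor
  · intro h
    obtain ⟨P, Y, rfl, hP, hY⟩ := split_min E hU hinc h.1
    obtain ⟨Q, hQY, hQ⟩ := exists_min E hY
    refine ⟨P, Q, hP, hQ, ?_⟩
    by_contra hne
    exact h.2 (P ++ Q) ((List.prefix_append_right_inj P).2 hQY) hne (le_append E hP.1 hQ.1)
  · rintro ⟨P, Q, hP, hQ, rfl⟩
    refine ⟨le_append E hP.1 hQ.1, ?_⟩
    intro Z hZ hne hle
    obtain ⟨P', Q', rfl, hP', hQ'⟩ := split_min E hU hinc hle
    have := min_unique E U P' P (P ++ Q) hP' hP ((List.prefix_append _ _).trans hZ)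
      (List.prefix_append _ _)
    subst this
    exact hQ.2 Q' ((List.prefix_append_right_inj P').1 hZ) (fun h => hne (by rw [h])) hQ'

theorem Iser_eq (hw : ∀ a, 0 < w a) (hfin : ∀ n, {a : A | w a = n}.Finite) (W : List A) :
    Iser w E W = IserStar w E W * gf w Set.univ := by
  refine gf_mul w hw hfin {X | E.le W X} {X | MinContainer E W X} Set.univ ?_ (min_unique E W)
  intro X
  simp only [Set.mem_ofPred_eq, Set.mem_univ, true_and]
  constructor
  · intro h
    obtain ⟨P, ⟨Q, hQ⟩, hP⟩ := exists_min E h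
    exact ⟨P, Q, hP, hQ⟩
  · rintro ⟨P, Q, hP, rfl⟩
    exact le_of_prefix E hP.1 (List.prefix_append _ _)

theorem wt_eq_zero (hw : ∀ a, 0 < w a) (V : List A) : wt w V = 0 ↔ V = [] := by
  cases V with
  | nil => simp [wt]
  | cons a V => have := hw a; simp [wt]; omega

theorem gf_univ_ne (hw : ∀ a, 0 < w a) : gf w Set.univ ≠ 0 := by
  intro h
  have h1 := congrArg (PowerSeries.coeff 0) h
  simp [gf, wt_eq_zero hw] at h1

theorem star_nil : IserStar w E [] = 1 := by
  ext n
  have h : ∀ V, MinContainer E [] V ↔ V = [] := by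
    intro V
    constructor
    · intro h
      by_contra hne
      exact h.2 [] List.nil_prefix (Ne.symm hne) (E.le_refl _)
    · rintro rfl
      exact ⟨E.le_refl _, fun P h hne => absurd (List.prefix_nil.1 h) hne⟩
  simp only [IserStar, PowerSeries.coeff_mk, h, PowerSeries.coeff_one]
  split_ifs with hn
  · have : {V : List A | V = [] ∧ wt w V = n} = {[]} := by
      ext V; simp only [Set.mem_ofPred_eq, Set.mem_singleton_iff]
      exact ⟨fun h => h.1, fun h => ⟨h, by rw [h, hn]; simp [wt]⟩⟩
    rw [this]; simp
  · have : {V : List A | V = [] ∧ wt w V = n} = ∅ := by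
      ext V; simp only [Set.mem_ofPred_eq, Set.mem_empty_iff_false, iff_false]
      rintro ⟨rfl, h⟩
      exact hn (by simpa [wt] using h.symm)
    rw [this]; simp

theorem star_flatten (hw : ∀ a, 0 < w a) (hfin : ∀ n, {a : A | w a = n}.Finite)
    (L : List (List A)) (h : IncompatFactorisation E L) :
    IserStar w E L.flatten = (L.map (IserStar w E)).prod := by
  induction L with
  | nil => simpa using star_nil E
  | cons U L ih =>
    obtain ⟨h1, h2⟩ := h
    have hL : IncompatFactorisation E L :=
      ⟨fun U h => h1 U (List.mem_cons_of_mem _ h), List.IsChain.tail h2⟩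
    rw [List.flatten_cons, List.map_cons, List.prod_cons, ← ih hL]
    apply star_append E hw hfin (h1 U (by simp))
    intro a b ha hb
    cases L with
    | nil => simp at hb
    | cons V L =>
      have hV : V ≠ [] := h1 V (by simp)
      refine (List.isChain_cons_cons.1 h2).1 a b ha ?_
      cases V with
      | nil => exact absurd rfl hV
      | cons v V => simpa using hb

end IncShuffle

/-- **Corollary `cor-incompatible-shuffle`.**  Suppose that for `1 ≤ i ≤ k` we have
`I_{W_i}(x) = I_{V_i}(x)`, and let `π` be a permutation of `{1,…,k}`.  If both
factorisations `W = W₁W₂⋯W_k` and `V = V_{π(1)}V_{π(2)}⋯V_{π(k)}` are incompatible,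
then `I_W(x) = I_V(x)`. -/
theorem Iser_eq_of_incompat_shuffle {A : Type*} (w : A → ℕ)
    (hw : ∀ a, 0 < w a) (hfin : ∀ n, {a : A | w a = n}.Finite)
    (E : EmbeddingOrder A w)
    (k : ℕ) (hk : 0 < k) (Ws Vs : Fin k → List A)
    (hWV : ∀ i, Iser w E (Ws i) = Iser w E (Vs i))
    (π : Equiv.Perm (Fin k))
    (hW : IncompatFactorisation E (List.ofFn Ws))
    (hV : IncompatFactorisation E (List.ofFn fun i => Vs (π i))) :
    Iser w E (List.ofFn Ws).flatten
      = Iser w E (List.ofFn fun i => Vs (π i)).flatten := by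
  rw [IncShuffle.Iser_eq E hw hfin, IncShuffle.Iser_eq E hw hfin,
    IncShuffle.star_flatten E hw hfin _ hW, IncShuffle.star_flatten E hw hfin _ hV]
  have hs : ∀ i, IserStar w E (Ws i) = IserStar w E (Vs i) := by
    intro i
    have h := hWV i
    rw [IncShuffle.Iser_eq E hw hfin, IncShuffle.Iser_eq E hw hfin] at h
    exact mul_right_cancel₀ (IncShuffle.gf_univ_ne hw) h
  congr 1
  rw [List.map_ofFn, List.map_ofFn, List.prod_ofFn, List.prod_ofFn]
  simp only [Function.comp, hs]
  exact (Equiv.prod_comp π fun i => IserStar w E (Vs i)).symm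
end

section
/- Assume A* is aperiodic and supercritical. For every word P = p₁p₂⋯p_k in A*, there is an ε_P > 0 such that, with probability at least 1 − 2^{−Ω(n)}, a uniformly random word X ∈ A*_n contains at least ε_P·n pairwise disjoint P-blocks. -/
/-- `X` contains `m` pairwise disjoint `P`-blocks: there are `m` starting positions,
consecutive ones at distance at least `P.length`, at each of which the `P.length`
consecutive letters of `X` form exactly the word `P`. -/
def HasDisjointBlocks {A : Type*} (P X : List A) (m : ℕ) : Prop :=
  ∃ g : ℕ → ℕ, (∀ i < m, (X.drop (g i)).take P.length = P) ∧
    ∀ i, i + 1 < m → g i + P.length ≤ g (i + 1)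

open scoped ENNReal

namespace RWB

lemma tsum_pi {α : Type*} (h : α → ℝ≥0∞) (n : ℕ) :
    ∑' f : Fin n → α, ∏ i, h (f i) = (∑' a, h a) ^ n := by
  induction n with
  | zero => simp [tsum_fintype]
  | succ n ih =>
    rw [← (Fin.consEquiv (fun _ : Fin (n+1) => α)).tsum_eq, ENNReal.tsum_prod', pow_succ', ← ih]
    simp only [Fin.consEquiv_apply, Fin.prod_univ_succ, Fin.cons_zero, Fin.cons_succ]
    simp only [ENNReal.tsum_mul_left, ENNReal.tsum_mul_right]

lemma tsum_list {α : Type*} (h : α → ℝ≥0∞) :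
    ∑' l : List α, (l.map h).prod = ∑' n : ℕ, (∑' a, h a) ^ n := by
  rw [← List.equivSigmaTuple.symm.tsum_eq, ENNReal.tsum_sigma']
  refine tsum_congr fun n => ?_
  rw [← tsum_pi]
  refine tsum_congr fun f => ?_
  simp [List.equivSigmaTuple, List.map_ofFn, List.prod_ofFn]

lemma wt_append {A : Type*} (w : A → ℕ) (X Y : List A) : wt w (X ++ Y) = wt w X + wt w Y := by
  simp [wt]

lemma wt_ofFn {A : Type*} (w : A → ℕ) {n : ℕ} (f : Fin n → A) :
    wt w (List.ofFn f) = ∑ i, w (f i) := by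
  simp [wt, List.map_ofFn, List.sum_ofFn]

/-- glue chunks -/
def glue {A : Type*} {k : ℕ} (q : List (Fin k → A) × (Σ j : Fin k, Fin j → A)) : List A :=
  (q.1.map List.ofFn).flatten ++ List.ofFn q.2.2

lemma glue_surj {A : Type*} {k : ℕ} (hk : 0 < k) (X : List A) :
    ∃ q : List (Fin k → A) × (Σ j : Fin k, Fin j → A), glue q = X := by
  induction h : X.length using Nat.strong_induction_on generalizing X with
  | _ n ih =>
    by_cases hn : n < k
    · exact ⟨([], ⟨⟨X.length, by omega⟩, X.get⟩), by simp [glue]⟩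
    · obtain ⟨q, hq⟩ := ih (X.drop k).length (by simp; omega) (X.drop k) rfl
      refine ⟨((fun i => X.get ⟨i, by omega⟩) :: q.1, q.2), ?_⟩
      have h1 : List.ofFn (fun i : Fin k => X.get ⟨i, by omega⟩) = X.take k := by
        apply List.ext_getElem
        · simp; omega
        · intro i h1 h2; simp
      conv_rhs => rw [← List.take_append_drop k X, ← hq]
      simp only [glue, List.map_cons, List.flatten_cons, List.append_assoc, h1]

open Classical in
lemma glue_blocks {A : Type*} (P : List A) (bs : List (Fin P.length → A)) (R : List A) :
    HasDisjointBlocks P ((bs.map List.ofFn).flatten ++ R) (bs.count P.get) := by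
  induction bs with
  | nil => exact ⟨fun _ => 0, by simp, by simp⟩
  | cons b bs ih =>
    obtain ⟨g, h1, h2⟩ := ih
    have hd : ∀ j, (((b :: bs).map List.ofFn).flatten ++ R).drop (P.length + j) =
        ((bs.map List.ofFn).flatten ++ R).drop j := by
      intro j
      rw [List.map_cons, List.flatten_cons, List.append_assoc, ← List.drop_drop]
      rw [List.drop_left' (by simp)]
    by_cases hb : b = P.get
    · refine ⟨fun i => match i with | 0 => 0 | i+1 => P.length + g i, ?_, ?_⟩
      · intro i hi
        cases i with
        | zero =>
          subst hb
          simp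
        | succ i =>
          simp only [hd]
          exact h1 i (by simpa [hb] using hi)
      · intro i hi
        have hi' : i < bs.count P.get := by simpa [hb] using hi
        cases i with
        | zero => simp
        | succ i => have := h2 i hi'; simp only; omega
    · refine ⟨fun i => P.length + g i, ?_, ?_⟩
      · intro i hi
        simp only [hd]
        exact h1 i (by simpa [hb, List.count_cons] using hi)
      · intro i hi
        have := h2 i (by simpa [hb, List.count_cons] using hi)
        simp only; omega

open Classical in
lemma term_eq {A : Type*} (w : A → ℕ) {k : ℕ} (p : Fin k → A) (x : ℝ≥0∞)
    (q : List (Fin k → A) × (Σ j : Fin k, Fin j → A)) :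
    (q.1.map fun f => (∏ i, x ^ w (f i)) * (if f = p then 2⁻¹ else 1)).prod *
      ∏ i, x ^ w (q.2.2 i) = x ^ wt w (glue q) * 2⁻¹ ^ q.1.count p := by
  obtain ⟨bs, r⟩ := q
  induction bs with
  | nil => simp [glue, wt_ofFn, Finset.prod_pow_eq_pow_sum]
  | cons b bs ih =>
    have : glue (b :: bs, r) = List.ofFn b ++ glue (bs, r) := by simp [glue]
    simp only [List.map_cons, List.prod_cons, this, wt_append, pow_add, mul_assoc] at ih ⊢
    rw [ih, wt_ofFn, Finset.prod_pow_eq_pow_sum]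
    by_cases hb : b = p
    · simp [hb, pow_succ]; ring
    · simp [hb]

open Classical in
lemma total {A : Type*} (w : A → ℕ) {k : ℕ} (p : Fin k → A) (x : ℝ≥0∞) 
    (hA : ∑' a, x ^ w a ≠ ⊤)
    (hB : ∑' f : Fin k → A, (∏ i, x ^ w (f i)) * (if f = p then 2⁻¹ else 1) < 1) :
    ∑' q : List (Fin k → A) × (Σ j : Fin k, Fin j → A),
      x ^ wt w (glue q) * 2⁻¹ ^ q.1.count p ≠ ⊤ := by
  simp_rw [← term_eq w p x]
  have key : ∀ (u : List (Fin k → A) → ℝ≥0∞) (v : (Σ j : Fin k, Fin j → A) → ℝ≥0∞),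
      ∑' q : List (Fin k → A) × (Σ j : Fin k, Fin j → A), u q.1 * v q.2 =
        (∑' b, u b) * ∑' r, v r := by
    intro u v
    rw [ENNReal.tsum_prod']
    simp only [ENNReal.tsum_mul_left, ENNReal.tsum_mul_right]
  rw [key (fun bs => (bs.map fun f => (∏ i, x ^ w (f i)) * (if f = p then 2⁻¹ else 1)).prod)
    (fun r => ∏ i, x ^ w (r.2 i)), tsum_list, ENNReal.tsum_geometric, ENNReal.tsum_sigma']
  refine ENNReal.mul_ne_top ?_ ?_
  · simp only [ne_eq, ENNReal.inv_eq_top, tsub_eq_zero_iff_le, not_le]; exact hB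
  · rw [tsum_fintype]
    refine ENNReal.sum_ne_top.2 fun j _ => ?_
    simp only
    rw [tsum_pi (fun a => x ^ w a)]
    exact ENNReal.pow_ne_top hA

lemma finite_wt {A : Type*} (w : A → ℕ) (hw : ∀ a, 0 < w a)
    (hf : ∀ n, {a | w a ≤ n}.Finite) (n : ℕ) : {X : List A | wt w X = n}.Finite := by
  induction n using Nat.strong_induction_on with
  | _ n ih =>
    have : {X : List A | wt w X = n} ⊆
        {[]} ∪ ⋃ a ∈ {a | w a ≤ n}, (List.cons a) '' {X : List A | wt w X = n - w a ∧ 0 < n} := by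
      intro X hX
      cases X with
      | nil => simp
      | cons a X =>
        right
        have h0 := hw a
        simp only [wt, List.map_cons, List.sum_cons, Set.mem_ofPred_eq] at hX
        simp only [Set.mem_iUnion, Set.mem_image, Set.mem_ofPred_eq]
        exact ⟨a, by omega, X, ⟨by simp only [wt]; omega, by omega⟩, rfl⟩
    refine Set.Finite.subset ?_ this
    refine (Set.finite_singleton _).union ((hf n).biUnion fun a _ => Set.Finite.image _ ?_)
    rcases Nat.eq_zero_or_pos n with rfl | hn
    · simp
    · refine (ih (n - w a) (by have := hw a; omega)).subset fun X hX => hX.1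

lemma rec_lower {A : Type*} (w : A → ℕ) 
    (hf : ∀ n, {X : List A | wt w X = n}.Finite) (F : Finset A) (n : ℕ) (hn : ∀ a ∈ F, w a ≤ n) :
    ∑ a ∈ F, Set.ncard {X : List A | wt w X = n - w a} ≤ Set.ncard {X : List A | wt w X = n} := by
  classical
  have h1 : ∀ m, Set.ncard {X : List A | wt w X = m} = (hf m).toFinset.card := fun m =>
    Set.ncard_eq_toFinset_card _ (hf m)
  simp only [h1]
  rw [← Finset.card_sigma]
  refine Finset.card_le_card_of_injOn (fun s => s.1 :: s.2) ?_ ?_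
  · rintro ⟨a, X⟩ h
    simp only [Finset.coe_sigma, Set.mem_sigma_iff, Finset.mem_coe, Set.Finite.mem_toFinset,
      Set.mem_ofPred_eq] at h
    have := hn a h.1
    simp only [Finset.mem_coe, Set.Finite.mem_toFinset, Set.mem_ofPred_eq]
    simp only [wt, List.map_cons, List.sum_cons] at h ⊢
    omega
  · rintro ⟨a, X⟩ _ ⟨b, Y⟩ _ h
    simp only [List.cons.injEq] at h
    obtain ⟨rfl, rfl⟩ := h
    rfl

lemma eventually_pos {A : Type*} (w : A → ℕ)
    (haper : ∀ d : ℕ, (∀ a : A, d ∣ w a) → d = 1) :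
    ∃ n0, ∀ n ≥ n0, ∃ X : List A, wt w X = n := by
  obtain ⟨n0, h⟩ := Nat.exists_mem_closure_of_ge (Set.range w)
  have h1 : Nat.setGcd (Set.range w) = 1 :=
    haper _ fun a => Nat.setGcd_dvd_of_mem ⟨a, rfl⟩
  have key : ∀ n ∈ AddSubmonoid.closure (Set.range w), ∃ X : List A, wt w X = n := by
    intro n hn
    induction hn using AddSubmonoid.closure_induction with
    | mem x hx => obtain ⟨a, rfl⟩ := hx; exact ⟨[a], by simp [wt]⟩
    | zero => exact ⟨[], by simp [wt]⟩
    | add x y _ _ h1 h2 =>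
      obtain ⟨X, hX⟩ := h1
      obtain ⟨Y, hY⟩ := h2
      exact ⟨X ++ Y, by rw [wt_append, hX, hY]⟩
  exact ⟨n0, fun n hn => key n (h n hn (by simp [h1]))⟩

lemma lower {A : Type*} (w : A → ℕ) (hw : ∀ a, 0 < w a)
    (haper : ∀ d : ℕ, (∀ a : A, d ∣ w a) → d = 1)
    (hf : ∀ n, {X : List A | wt w X = n}.Finite) (F : Finset A) (z : ℝ) (hz : 0 < z)
    (hF : 1 ≤ ∑ a ∈ F, z ^ w a) :
    ∃ c : ℝ, 0 < c ∧ ∃ n0 : ℕ, ∀ n ≥ n0, c ≤ z ^ n * Set.ncard {X : List A | wt w X = n} := by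
  obtain ⟨n0, h0⟩ := eventually_pos w haper
  set M := F.sup w with hM
  have hMa : ∀ a ∈ F, w a ≤ M := fun a ha => Finset.le_sup ha
  set f : ℕ → ℝ := fun n => z ^ n * Set.ncard {X : List A | wt w X = n} with hfdef
  have hpos : ∀ n ≥ n0, 0 < f n := by
    intro n hn
    have : 0 < Set.ncard {X : List A | wt w X = n} := (Set.ncard_pos (hf n)).2 (h0 n hn)
    simp only [hfdef]; positivity
  obtain ⟨m, hm, hmin⟩ := Finset.exists_min_image (Finset.Icc n0 (n0 + M)) f ⟨n0, by simp⟩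
  refine ⟨f m, hpos m (Finset.mem_Icc.1 hm).1, n0, fun n => ?_⟩
  induction n using Nat.strong_induction_on with
  | _ n ih =>
    intro hn
    by_cases hnM : n ≤ n0 + M
    · exact hmin n (Finset.mem_Icc.2 ⟨hn, hnM⟩)
    · have hr := rec_lower w hf F n (fun a ha => by have := hMa a ha; omega)
      have hr' : ∑ a ∈ F, (Set.ncard {X : List A | wt w X = n - w a} : ℝ) ≤
        Set.ncard {X : List A | wt w X = n} := by exact_mod_cast hr
      calc f m ≤ f m * ∑ a ∈ F, z ^ w a :=
            le_mul_of_one_le_right (hpos m (Finset.mem_Icc.1 hm).1).le hF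
        _ = ∑ a ∈ F, z ^ w a * f m := by rw [Finset.mul_sum]; simp only [mul_comm]
        _ ≤ ∑ a ∈ F, z ^ w a * f (n - w a) := by
            refine Finset.sum_le_sum fun a ha => ?_
            have h1 := hMa a ha
            have h2 := hw a
            have := ih (n - w a) (by omega) (by omega)
            gcongr
        _ = z ^ n * ∑ a ∈ F, (Set.ncard {X : List A | wt w X = n - w a} : ℝ) := by
            rw [Finset.mul_sum]
            refine Finset.sum_congr rfl fun a ha => ?_
            have h1 := hMa a ha
            simp only [hfdef]
            rw [← mul_assoc, ← pow_add]
            congr 3; omega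
        _ ≤ f n := by simp only [hfdef]; gcongr

open Classical in
/-- Existence of good parameters `z < x`. -/
lemma params {A : Type*} (w : A → ℕ) (hw : ∀ a, 0 < w a)
    (hsuper : ∃ x : ℝ, 0 < x ∧ Summable (fun a : A => x ^ w a) ∧ 1 < ∑' a : A, x ^ w a)
    (k m : ℕ) :
    ∃ z x : ℝ, 0 < z ∧ z < x ∧ Summable (fun a : A => x ^ w a) ∧
      (∃ F : Finset A, 1 ≤ ∑ a ∈ F, z ^ w a) ∧ (∑' a : A, x ^ w a) ^ k - x ^ m / 2 < 1 := by
  obtain ⟨y, hy, hs, h1⟩ := hsuper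
  set g : ℝ → ℝ := fun t => ∑' a : A, t ^ w a with hg
  have hsum : ∀ t, 0 ≤ t → t ≤ y → Summable (fun a : A => t ^ w a) := fun t h0 ht =>
    Summable.of_nonneg_of_le (fun a => by positivity) (fun a => by gcongr) hs
  have hcont : ContinuousOn g (Set.Icc 0 y) := by
    refine continuousOn_tsum (u := fun a => y ^ w a) (fun a => by fun_prop) hs ?_
    intro a t ht
    rw [Real.norm_of_nonneg (pow_nonneg ht.1 _)]
    exact pow_le_pow_left₀ ht.1 ht.2 _
  have g0 : g 0 = 0 := by
    simp only [hg]
    rw [tsum_congr (fun a => zero_pow (hw a).ne')]; simp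
  obtain ⟨κ, hκ, hκ1⟩ := intermediate_value_Icc hy.le hcont (show (1:ℝ) ∈ Set.Icc (g 0) (g y) from
    ⟨by rw [g0]; norm_num, h1.le⟩)
  have hκ0 : 0 < κ := lt_of_le_of_ne hκ.1 (by rintro rfl; rw [g0] at hκ1; norm_num at hκ1)
  have hκy : κ < y := lt_of_le_of_ne hκ.2 (by rintro rfl; exact h1.ne' hκ1)
  have hne : Nonempty A := by
    by_contra h
    rw [not_nonempty_iff] at h
    simp [hg] at hκ1
  obtain ⟨a0⟩ := hne
  have hB : ContinuousAt (fun t => g t ^ k - t ^ m / 2) κ := by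
    have : ContinuousAt g κ := hcont.continuousAt (Icc_mem_nhds hκ0 hκy)
    fun_prop
  have hB1 : g κ ^ k - κ ^ m / 2 < 1 := by
    rw [hκ1]; have : 0 < κ ^ m := by positivity
    simp; positivity
  have hev := (hB.eventually_lt continuousAt_const hB1)
  have hev2 : ∀ᶠ t in nhdsWithin κ (Set.Ioi κ), g t ^ k - t ^ m / 2 < 1 :=
    hev.filter_mono nhdsWithin_le_nhds
  have hev3 : ∀ᶠ t in nhdsWithin κ (Set.Ioi κ), t ∈ Set.Ioo κ y := Ioo_mem_nhdsGT hκy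
  obtain ⟨x, hx1, hx2⟩ := (hev2.and hev3).exists
  refine ⟨(κ + x) / 2, x, by linarith [hx2.1], by linarith [hx2.1],
    hsum x (by linarith [hx2.1]) hx2.2.le, ?_, hx1⟩
  set z := (κ + x) / 2 with hz
  have hzκ : κ < z := by linarith [hx2.1]
  have hzs := hsum z (by linarith) (by linarith [hx2.1, hx2.2])
  have hgz : 1 < g z := by
    rw [← hκ1]
    exact Summable.tsum_lt_tsum (i := a0) (fun a => by gcongr) 
      (pow_lt_pow_left₀ hzκ hκ0.le (hw a0).ne') (hsum κ hκ0.le hκy.le) hzs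
  obtain ⟨F, hF⟩ := (hzs.hasSum.eventually_const_lt hgz).exists
  exact ⟨F, hF.le⟩

open Classical in
lemma upper {A : Type*} (w : A → ℕ) (P : List A) (hP : 0 < P.length) (x : ℝ) (hx : 0 < x)
    (hs : Summable (fun a : A => x ^ w a))
    (hB : (∑' a : A, x ^ w a) ^ P.length - x ^ wt w P / 2 < 1) :
    ∃ G : ℝ, 0 ≤ G ∧ ∀ (n : ℕ) (t : ℝ) (S : Finset (List A)), (∀ X ∈ S, wt w X = n ∧
      ¬ ∃ m : ℕ, t ≤ m ∧ HasDisjointBlocks P X m) → S.card * (x ^ n * 2 ^ (-t)) ≤ G := by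
  have hAx : ∑' a, ENNReal.ofReal x ^ w a = ENNReal.ofReal (∑' a, x ^ w a) := by
    rw [ENNReal.ofReal_tsum_of_nonneg (fun a => by positivity) hs]
    exact tsum_congr fun a => (ENNReal.ofReal_pow hx.le _).symm
  have htot := total w P.get (ENNReal.ofReal x) (by rw [hAx]; exact ENNReal.ofReal_ne_top) (by
    have h2 : (∑' f : Fin P.length → A, (∏ i, ENNReal.ofReal x ^ w (f i)) *
        (if f = P.get then 2⁻¹ else 1)) + ENNReal.ofReal (x ^ wt w P / 2) =
        ENNReal.ofReal ((∑' a, x ^ w a) ^ P.length) := by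
      rw [ENNReal.ofReal_pow (tsum_nonneg fun a => by positivity), ← hAx, 
        ← tsum_pi (fun a => ENNReal.ofReal x ^ w a),
        ← tsum_ite_eq P.get (fun _ => ENNReal.ofReal (x ^ wt w P / 2)), ← ENNReal.tsum_add]
      refine tsum_congr fun f => ?_
      by_cases hf : f = P.get
      · subst hf
        have : (∏ i, ENNReal.ofReal x ^ w (P.get i)) = ENNReal.ofReal (x ^ wt w P) := by
          rw [Finset.prod_pow_eq_pow_sum, ← wt_ofFn, List.ofFn_get, ENNReal.ofReal_pow hx.le]
        rw [this]
        simp only [if_true]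
        rw [ENNReal.ofReal_div_of_pos (by norm_num), div_eq_mul_inv, ← mul_add]
        simp [ENNReal.inv_two_add_inv_two]
      · simp [hf]
    have h3 : ENNReal.ofReal ((∑' a, x ^ w a) ^ P.length) < 1 + ENNReal.ofReal (x ^ wt w P / 2) := by
      rw [← ENNReal.ofReal_one, ← ENNReal.ofReal_add (by norm_num) (by positivity)]
      refine (ENNReal.ofReal_lt_ofReal_iff (by positivity)).2 (by linarith)
    rw [← h2] at h3
    exact lt_of_add_lt_add_right h3)
  refine ⟨_, ENNReal.toReal_nonneg (a := ∑' q : List (Fin P.length → A) × (Σ j : Fin P.length, Fin j → A),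
      ENNReal.ofReal x ^ wt w (glue q) * 2⁻¹ ^ q.1.count P.get), ?_⟩
  intro n t S hS
  choose ψ hψ using glue_surj (A := A) hP
  have hinj : Function.Injective (fun X : S => ψ X.1) := by
    intro X Y h
    apply Subtype.ext
    rw [← hψ X.1, ← hψ Y.1]; exact congrArg glue h
  have hle := ENNReal.tsum_comp_le_tsum_of_injective hinj (fun q => 
      ENNReal.ofReal x ^ wt w (glue q) * 2⁻¹ ^ q.1.count P.get)
  have h4 : ∑' X : S, ENNReal.ofReal (x ^ n * 2 ^ (-t)) ≤ _ := le_trans (ENNReal.tsum_le_tsum ?_) hle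
  · rw [tsum_fintype, Finset.sum_const, Finset.card_univ, Fintype.card_coe, nsmul_eq_mul] at h4
    have h5 := ENNReal.toReal_mono htot h4
    rw [ENNReal.toReal_mul, ENNReal.toReal_ofReal (by positivity)] at h5
    simpa using h5
  · rintro ⟨X, hX⟩
    obtain ⟨hw1, hno⟩ := hS X hX
    simp only [hψ, hw1]
    rw [ENNReal.ofReal_mul (by positivity), ENNReal.ofReal_pow hx.le]
    gcongr
    have hb := glue_blocks P (ψ X).1 (List.ofFn (ψ X).2.2)
    have hb' : HasDisjointBlocks P X ((ψ X).1.count P.get) := by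
      have := hψ X; rw [glue] at this; rwa [this] at hb
    have hc : ((ψ X).1.count P.get : ℝ) < t := by
      by_contra hc; exact hno ⟨_, not_lt.1 hc, hb'⟩
    have : (2⁻¹ : ℝ≥0∞) = ENNReal.ofReal (2⁻¹) := by
      rw [ENNReal.ofReal_inv_of_pos (by norm_num)]; simp
    rw [this, ← ENNReal.ofReal_pow (by norm_num)]
    refine ENNReal.ofReal_le_ofReal ?_
    rw [inv_pow, ← Real.rpow_natCast, ← Real.rpow_neg (by norm_num)]
    exact Real.rpow_le_rpow_of_exponent_le (by norm_num) (by linarith)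

end RWB

/-- **Proposition `pro-occur`.**  Let `A` be an alphabet with positive integer letter
weights such that `A*` is aperiodic (the gcd of the letter weights is `1`) and
supercritical (`A(x) = Σ_a x^{weight a}` exceeds `1` somewhere inside its disc of
convergence).  Then for every word `P ∈ A*` there is `ε = ε_P > 0` such that with
probability at least `1 − 2^{−Ω(n)}`, a uniformly random word `X ∈ A*` of weight `n`
contains at least `ε·n` pairwise disjoint `P`-blocks.  (Stated by counting: the number
of weight-`n` words failing this is at most `c·2^{−δn}` times the number of all
weight-`n` words, for some constants `c, δ > 0`.) -/
theorem random_word_disjoint_blocks {A : Type*} (w : A → ℕ) (hw : ∀ a, 0 < w a)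
    (hsuper : ∃ x : ℝ, 0 < x ∧ Summable (fun a : A => x ^ w a) ∧ 1 < ∑' a : A, x ^ w a)
    (haper : ∀ d : ℕ, (∀ a : A, d ∣ w a) → d = 1)
    (P : List A) :
    ∃ ε : ℝ, 0 < ε ∧ ∃ c δ : ℝ, 0 < c ∧ 0 < δ ∧ ∀ n : ℕ,
      (Set.ncard {X : List A | wt w X = n ∧
          ¬ ∃ m : ℕ, ε * n ≤ (m : ℝ) ∧ HasDisjointBlocks P X m} : ℝ)
        ≤ c * 2 ^ (-δ * (n : ℝ)) * (Set.ncard {X : List A | wt w X = n} : ℝ) := by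
  rcases Nat.eq_zero_or_pos P.length with hP | hP
  · refine ⟨1, one_pos, 1, 1, one_pos, one_pos, fun n => ?_⟩
    have : {X : List A | wt w X = n ∧
          ¬ ∃ m : ℕ, (1:ℝ) * n ≤ (m : ℝ) ∧ HasDisjointBlocks P X m} = ∅ := by
      ext X
      simp only [Set.mem_ofPred_eq, Set.mem_empty_iff_false, iff_false, not_and, not_not]
      intro _
      refine ⟨n, by simp, fun _ => 0, ?_, ?_⟩
      · simp [List.length_eq_zero_iff.1 hP]
      · simp [hP]
    rw [this]
    simp only [Set.ncard_empty, Nat.cast_zero]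
    positivity
  obtain ⟨z, x, hz, hzx, hs, ⟨F, hF⟩, hB⟩ := RWB.params w hw hsuper P.length (wt w P)
  have hx : 0 < x := hz.trans hzx
  have hfin1 : ∀ n, {a | w a ≤ n}.Finite := by
    intro n
    have hc : 0 < min 1 x ^ n := by positivity
    have := hs.tendsto_cofinite_zero.eventually_lt_const hc
    rw [Filter.eventually_cofinite] at this
    refine this.subset fun a ha => ?_
    simp only [Set.mem_ofPred_eq, not_lt] at ha ⊢
    calc min 1 x ^ n ≤ min 1 x ^ w a :=
          pow_le_pow_of_le_one (by positivity) (min_le_left _ _) ha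
      _ ≤ x ^ w a := pow_le_pow_left₀ (by positivity) (min_le_right _ _) _
  have hf := RWB.finite_wt w hw hfin1
  obtain ⟨c, hc, n0, hlow⟩ := RWB.lower w hw haper hf F z hz hF
  obtain ⟨G, hG, hup⟩ := RWB.upper w P hP x hx hs hB
  set ε := Real.logb 2 (x / z) / 2 with hε
  have hε0 : 0 < ε := by
    have : 0 < Real.logb 2 (x / z) := Real.logb_pos (by norm_num) ((one_lt_div hz).2 hzx)
    positivity
  refine ⟨ε, hε0, G / c + 2 ^ (ε * n0), ε, by positivity, hε0, fun n => ?_⟩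
  set N : ℝ := (Set.ncard {X : List A | wt w X = n} : ℝ) with hN
  have hN0 : 0 ≤ N := by positivity
  set S := {X : List A | wt w X = n ∧ ¬ ∃ m : ℕ, ε * n ≤ (m : ℝ) ∧ HasDisjointBlocks P X m} with hS
  have hSsub : S ⊆ {X : List A | wt w X = n} := fun X hX => hX.1
  have hSfin : S.Finite := (hf n).subset hSsub
  by_cases hn : n0 ≤ n
  · have h1 := hup n (ε * n) hSfin.toFinset (fun X hX => by simpa [hS] using hX)
    rw [← Set.ncard_eq_toFinset_card S hSfin] at h1
    have h2 := hlow n hn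
    have hxz : x ^ n = z ^ n * (2 ^ (ε * n) * 2 ^ (ε * n)) := by
      have : (2:ℝ) ^ (ε * n) * 2 ^ (ε * n) = (x / z) ^ n := by
        rw [← Real.rpow_add (by norm_num), ← add_mul, Real.rpow_mul (by norm_num), Real.rpow_natCast]
        congr 1
        rw [hε, add_halves]
        exact Real.rpow_logb (by norm_num) (by norm_num) (by positivity)
      rw [this, div_pow]; field_simp
    set E : ℝ := 2 ^ (ε * n) with hE
    have hE0 : 0 < E := by positivity
    have hEneg : (2:ℝ) ^ (-(ε * n)) = E⁻¹ := Real.rpow_neg (by norm_num) _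
    have hEneg' : (2:ℝ) ^ (-ε * n) = E⁻¹ := by rw [neg_mul, hEneg]
    rw [hEneg, hxz] at h1
    rw [hEneg']
    have h3 : (S.ncard : ℝ) * (z ^ n * E) ≤ G := by
      convert h1 using 2; field_simp
    have h4 : (S.ncard : ℝ) ≤ G / c * E⁻¹ * N := by
      have hzn : 0 < z ^ n := by positivity
      calc (S.ncard : ℝ) = (S.ncard : ℝ) * (z ^ n * E) * (z ^ n * E)⁻¹ := by field_simp
        _ ≤ G * (z ^ n * E)⁻¹ := by gcongr
        _ = G / c * E⁻¹ * (c * (z ^ n)⁻¹) := by field_simp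
        _ ≤ G / c * E⁻¹ * (z ^ n * N * (z ^ n)⁻¹) := by gcongr
        _ = _ := by field_simp
    refine h4.trans ?_
    gcongr
    have : (0:ℝ) < 2 ^ (ε * n0) := by positivity
    linarith
  · have h1 : (S.ncard : ℝ) ≤ N := by
      rw [hN]
      exact_mod_cast Set.ncard_le_ncard hSsub (hf n)
    refine h1.trans (le_mul_of_one_le_left hN0 ?_)
    have h2 : (1:ℝ) ≤ 2 ^ (ε * n0) * 2 ^ (-ε * n) := by
      rw [← Real.rpow_add (by norm_num)]
      apply Real.one_le_rpow (by norm_num)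
      have : (n:ℝ) ≤ n0 := by exact_mod_cast (not_le.1 hn).le
      nlinarith
    refine h2.trans ?_
    gcongr
    have : 0 ≤ G / c := by positivity
    linarith
end
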